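/- Assume the stability condition ρ(1 + β₁γ_{1,1}) < 1 and that the service and repair distributions have finite second moments μ_{i,2}, γ_{i,2}. Then the orbit-size generating function P(z) = [λ(1−z) + α(1 − δ₂(z))]/(λ(δ₁(z) − z)) · P₀(z) has a left derivative at z = 1 equal to E[N] = λ²[β₁μ_{1,1}γ_{1,2} + (1 + β₁γ_{1,1})²μ_{1,2}] / (2[1 − ρ(1 + β₁γ_{1,1})]) + λα[β₂μ_{2,1}γ_{2,2} + (1 + β₂γ_{2,1})²μ_{2,2}] / (2[1 + σ(1 + β₂γ_{2,1})]) + λ[ρ(1 + β₁γ_{1,1}) + σ(1 + β₂γ_{2,1})] / (ν[1 − ρ(1 + β₁γ_{1,1})]), where ρ = λμ_{1,1} and σ = αμ_{2,1}. -/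

import Mathlib

open MeasureTheory

/-- Laplace transform of a (Borel) measure on `ℝ`. -/
noncomputable def lapl (μ : Measure ℝ) (θ : ℝ) : ℝ :=
  ∫ x, Real.exp (-θ * x) ∂μ

/-! The transform `δᵢ(z)` is a Laplace transform composed with a function of `λ(1 - z)`, so two
finite moments of `Sᵢ` and `Rᵢ` give it an expansion of order two at `z = 1`. Hence
`(1 - δᵢ(z)) / (1 - z)` extends to a function `Fᵢ` that is differentiable from the left at `1`.
Cancelling `1 - z` throughout, `P = (λ + αF₂) / (λ(1 - F₁)) · C · φ`, where the logarithmic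
derivative of `φ` tends to `(λF₁ + αF₂) / (ν(1 - F₁))` evaluated at `1`; the mean is then given
by the product and quotient rules. -/

open Filter Topology Set

section SecondOrderExpansion

variable {𝕜 : Type*} [NontriviallyNormedField 𝕜]
  {f g : 𝕜 → 𝕜} {a b c d x₀ y₀ : 𝕜} {s t : Set 𝕜}

/-- `f x = f x₀ + a (x - x₀) + b (x - x₀)² + o((x - x₀)²)` as `x → x₀` within `s`. The encoding is
Carathéodory's: the slope function `F` takes the value `a` and has the derivative `b` at `x₀`, so
that rules for second-order expansions reduce to rules for first derivatives. -/
def HasSecondOrderExpansionWithinAt (f : 𝕜 → 𝕜) (a b : 𝕜) (s : Set 𝕜) (x₀ : 𝕜) : Prop :=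
  ∃ F : 𝕜 → 𝕜, F x₀ = a ∧ HasDerivWithinAt F b s x₀ ∧ ∀ x, f x = f x₀ + (x - x₀) * F x

namespace HasSecondOrderExpansionWithinAt

theorem of_tendsto
    (h : Tendsto (fun x => (f x - f x₀ - a * (x - x₀)) / (x - x₀) ^ 2) (𝓝[s \ {x₀}] x₀) (𝓝 b)) :
    HasSecondOrderExpansionWithinAt f a b s x₀ := by
  classical
  refine ⟨Function.update (slope f x₀) x₀ a, Function.update_self .., ?_, fun x => ?_⟩
  · rw [hasDerivWithinAt_iff_tendsto_slope]
    refine h.congr' ?_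
    filter_upwards [self_mem_nhdsWithin] with x hx
    have hx₀ : x - x₀ ≠ 0 := sub_ne_zero.2 hx.2
    rw [slope_def_field, Function.update_self, Function.update_of_ne hx.2, slope_def_field]
    field_simp
  · rcases eq_or_ne x x₀ with rfl | hx
    · simp
    · rw [Function.update_of_ne hx, slope_def_field, mul_div_cancel₀ _ (sub_ne_zero.2 hx)]
      ring

theorem hasDerivWithinAt (hf : HasSecondOrderExpansionWithinAt f a b s x₀) :
    HasDerivWithinAt f a s x₀ := by
  obtain ⟨F, rfl, hF, hfF⟩ := hf
  have hderiv := (((hasDerivWithinAt_id x₀ s).sub_const x₀).mul hF).const_add (f x₀)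
  simpa using hderiv.congr (fun x _ => hfF x) (hfF x₀)

theorem comp (hf : HasSecondOrderExpansionWithinAt f a b t y₀)
    (hg : HasSecondOrderExpansionWithinAt g c d s x₀) (hst : MapsTo g s t) (hx₀ : g x₀ = y₀) :
    HasSecondOrderExpansionWithinAt (fun x => f (g x)) (a * c) (b * c ^ 2 + a * d) s x₀ := by
  subst hx₀
  have hg' := hg.hasDerivWithinAt
  obtain ⟨F, rfl, hF, hfF⟩ := hf
  obtain ⟨G, rfl, hG, hgG⟩ := hg
  refine ⟨fun x => F (g x) * G x, rfl, ?_, fun x => ?_⟩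
  · exact ((hF.comp x₀ hg' hst).mul hG).congr_deriv (by simp only [Function.comp_apply]; ring)
  · linear_combination hfF (g x) + F (g x) * hgG x

end HasSecondOrderExpansionWithinAt

theorem hasSecondOrderExpansionWithinAt_sub_mul (c d x₀ : 𝕜) (s : Set 𝕜) :
    HasSecondOrderExpansionWithinAt (fun x => d - c * x) (-c) 0 s x₀ :=
  ⟨fun _ => -c, rfl, hasDerivWithinAt_const .., fun x => by ring⟩

end SecondOrderExpansion

section ExpNegIntegral

variable {g : ℝ → ℝ} {x G : ℝ}

theorem nhdsWithin_Iic_inf_ae_le (x : ℝ) : 𝓝[≤] x ⊓ ae volume ≤ 𝓝[<] x := by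
  rw [← Iic_sdiff_right, sdiff_eq, nhdsWithin_inter']
  exact inf_le_inf_left _ (le_principal_iff.2 (compl_mem_ae_iff.2 (measure_singleton x)))

theorem hasDerivWithinAt_exp_neg_integral (hg : StronglyMeasurableAtFilter g (𝓝[≤] x))
    (hG : Tendsto g (𝓝[<] x) (𝓝 G)) :
    HasDerivWithinAt (fun z => Real.exp (-∫ u in z..x, g u)) G (Iic x) x := by
  have hint : HasDerivWithinAt (fun z => ∫ u in z..x, g u) (-G) (Iic x) x :=
    intervalIntegral.integral_hasDerivWithinAt_of_tendsto_ae_left IntervalIntegrable.refl hg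
      (hG.mono_left (nhdsWithin_Iic_inf_ae_le x))
  simpa using hint.neg.exp

end ExpNegIntegral

section Laplace

variable {μ : Measure ℝ}

theorem ae_nonneg_of_measure_Iio_zero (h : μ (Iio 0) = 0) : ∀ᵐ x ∂μ, 0 ≤ x :=
  (measure_eq_zero_iff_ae_notMem.1 h).mono fun _ hx => not_lt.1 hx

theorem integral_id_nonneg_of_measure_Iio_zero (h : μ (Iio 0) = 0) : 0 ≤ ∫ x, x ∂μ :=
  integral_nonneg_of_ae (ae_nonneg_of_measure_Iio_zero h)

theorem abs_exp_neg_sub_one_add_le_sq {t : ℝ} (ht : 0 ≤ t) :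
    |Real.exp (-t) - 1 + t| ≤ t ^ 2 := by
  rcases le_total t 1 with ht1 | ht1
  · simpa using Real.abs_exp_sub_one_sub_id_le (x := -t) (by rwa [abs_neg, abs_of_nonneg ht])
  · rw [abs_of_nonneg (by linarith [Real.one_sub_le_exp_neg t])]
    nlinarith [Real.exp_le_one_iff.2 (neg_nonpos.2 ht)]

theorem tendsto_exp_neg_mul_second_order (x : ℝ) :
    Tendsto (fun θ : ℝ => (Real.exp (-θ * x) - 1 + θ * x) / θ ^ 2) (𝓝[≠] 0) (𝓝 (x ^ 2 / 2)) := by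
  have hlin : Tendsto (fun θ : ℝ => -θ * x) (𝓝[≠] 0) (𝓝 0) :=
    tendsto_nhdsWithin_of_tendsto_nhds (Continuous.tendsto' (by fun_prop) _ _ (by simp))
  have hscale : (fun θ : ℝ => (-θ * x) ^ 2) =O[𝓝[≠] 0] fun θ => θ ^ 2 :=
    ((Asymptotics.isBigO_refl _ _).const_mul_left (x ^ 2)).congr_left fun θ => by ring
  have hlim := (((Real.exp_sub_sum_range_succ_isLittleO_pow 2).comp_tendsto hlin).trans_isBigO
    hscale).tendsto_div_nhds_zero.add_const (x ^ 2 / 2)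
  rw [zero_add] at hlim
  refine hlim.congr' ?_
  filter_upwards [self_mem_nhdsWithin] with θ hθ
  have hθ' : θ ≠ 0 := hθ
  simp only [Function.comp_apply, Finset.sum_range_succ, Finset.sum_range_zero, Nat.factorial]
  push_cast
  field_simp
  ring

theorem measurable_lapl [SFinite μ] : Measurable (lapl μ) := by
  have hexp : StronglyMeasurable fun p : ℝ × ℝ => Real.exp (-p.1 * p.2) :=
    Continuous.stronglyMeasurable (by fun_prop)
  exact hexp.integral_prod_right.measurable

theorem lapl_zero [IsProbabilityMeasure μ] : lapl μ 0 = 1 := by simp [lapl]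

variable [IsFiniteMeasure μ]

theorem integrable_exp_neg_mul (h : ∀ᵐ x ∂μ, 0 ≤ x) {θ : ℝ} (hθ : 0 ≤ θ) :
    Integrable (fun x => Real.exp (-θ * x)) μ := by
  refine Integrable.mono' (integrable_const (1 : ℝ)) (by fun_prop) ?_
  filter_upwards [h] with x hx
  rw [Real.norm_eq_abs, Real.abs_exp, Real.exp_le_one_iff, neg_mul, neg_nonpos]
  positivity

theorem lapl_le_lapl_zero (h : ∀ᵐ x ∂μ, 0 ≤ x) {θ : ℝ} (hθ : 0 ≤ θ) : lapl μ θ ≤ lapl μ 0 := by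
  refine integral_mono_ae (integrable_exp_neg_mul h hθ) (integrable_exp_neg_mul h le_rfl) ?_
  filter_upwards [h] with x hx
  have := mul_nonneg hθ hx
  simpa

theorem integrable_id_of_integrable_sq (h : Integrable (fun x => x ^ 2) μ) :
    Integrable (fun x => x) μ :=
  ((memLp_two_iff_integrable_sq measurable_id.aestronglyMeasurable).2 h).integrable one_le_two

theorem integral_exp_neg_mul_second_order (h : ∀ᵐ x ∂μ, 0 ≤ x)
    (hsq : Integrable (fun x => x ^ 2) μ) {θ : ℝ} (hθ : 0 ≤ θ) :
    ∫ x, (Real.exp (-θ * x) - 1 + θ * x) / θ ^ 2 ∂μ =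
      (lapl μ θ - lapl μ 0 - -(∫ x, x ∂μ) * (θ - 0)) / (θ - 0) ^ 2 := by
  have hexp := integrable_exp_neg_mul h hθ
  have hone : Integrable (fun _ : ℝ => (1 : ℝ)) μ := integrable_const 1
  have hdiff : Integrable (fun x => Real.exp (-θ * x) - 1) μ := hexp.sub hone
  rw [integral_div, integral_add hdiff ((integrable_id_of_integrable_sq hsq).const_mul θ),
    integral_sub hexp hone, integral_const_mul]
  simp only [lapl, neg_zero, zero_mul, Real.exp_zero, sub_zero]
  ring

theorem hasSecondOrderExpansionWithinAt_lapl (h : ∀ᵐ x ∂μ, 0 ≤ x)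
    (hsq : Integrable (fun x => x ^ 2) μ) :
    HasSecondOrderExpansionWithinAt (lapl μ) (-∫ x, x ∂μ) ((∫ x, x ^ 2 ∂μ) / 2) (Ici 0) 0 := by
  have hlim : Tendsto (fun θ : ℝ => ∫ x, (Real.exp (-θ * x) - 1 + θ * x) / θ ^ 2 ∂μ) (𝓝[>] 0)
      (𝓝 (∫ x, x ^ 2 / 2 ∂μ)) := by
    refine tendsto_integral_filter_of_dominated_convergence (fun x => x ^ 2)
      (.of_forall fun θ => by fun_prop) ?_ hsq (.of_forall fun x =>
        (tendsto_exp_neg_mul_second_order x).mono_left (nhdsWithin_mono _ fun _ hθ => ne_of_gt hθ))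
    filter_upwards [self_mem_nhdsWithin] with θ (hθ : 0 < θ)
    filter_upwards [h] with x hx
    rw [Real.norm_eq_abs, abs_div, abs_of_pos (pow_pos hθ 2), div_le_iff₀ (pow_pos hθ 2), neg_mul,
      mul_comm (x ^ 2), ← mul_pow]
    exact abs_exp_neg_sub_one_add_le_sq (by positivity)
  apply HasSecondOrderExpansionWithinAt.of_tendsto
  rw [Ici_sdiff_left, ← integral_div]
  refine hlim.congr' ?_
  filter_upwards [self_mem_nhdsWithin] with θ (hθ : 0 < θ)
  exact integral_exp_neg_mul_second_order h hsq hθ.le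

end Laplace

section CompletionTime

variable {β lam : ℝ} {S R : Measure ℝ}

/-- The exponent at which the service transform is evaluated when the server fails at rate `β` and
its repair times are distributed as `R`; the function `h` of the model is
`h(z) = completionExponent β R (λ - λz)`. -/
noncomputable def completionExponent (β : ℝ) (R : Measure ℝ) (θ : ℝ) : ℝ :=
  θ + β * (1 - lapl R θ)

/-- The Laplace transform of a completion time, that is, of a service time distributed as `S`
together with the repairs that interrupt it; the function `δ` of the model is
`δ(z) = completionTransform β S R (λ - λz)`. -/
noncomputable def completionTransform (β : ℝ) (S R : Measure ℝ) (θ : ℝ) : ℝ :=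
  lapl S (completionExponent β R θ)

theorem eq_completionTransform {h δ : ℝ → ℝ}
    (hh : ∀ z, h z = lam + β - lam * z - β * lapl R (lam - lam * z))
    (hδ : ∀ z, δ z = lapl S (h z)) : δ = fun z => completionTransform β S R (lam - lam * z) := by
  funext z
  rw [hδ, hh, completionTransform, completionExponent]
  congr 1
  ring

theorem measurable_completionTransform [SFinite S] [SFinite R] :
    Measurable (completionTransform β S R) :=
  measurable_lapl.comp
    (measurable_id.add ((measurable_const.sub measurable_lapl).const_mul β))

variable [IsProbabilityMeasure R]

theorem completionExponent_zero : completionExponent β R 0 = 0 := by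
  simp [completionExponent, lapl_zero]

theorem completionTransform_zero [IsProbabilityMeasure S] : completionTransform β S R 0 = 1 := by
  rw [completionTransform, completionExponent_zero, lapl_zero]

theorem completionExponent_nonneg (hβ : 0 ≤ β) (hR : ∀ᵐ x ∂ R, 0 ≤ x) {θ : ℝ} (hθ : 0 ≤ θ) :
    0 ≤ completionExponent β R θ :=
  add_nonneg hθ (mul_nonneg hβ (sub_nonneg.2 ((lapl_le_lapl_zero hR hθ).trans_eq lapl_zero)))

theorem hasSecondOrderExpansionWithinAt_completionExponent (hR : ∀ᵐ x ∂ R, 0 ≤ x)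
    (hRsq : Integrable (fun x => x ^ 2) R) :
    HasSecondOrderExpansionWithinAt (completionExponent β R) (1 + β * ∫ x, x ∂ R)
      (-(β * ((∫ x, x ^ 2 ∂ R) / 2))) (Ici 0) 0 := by
  obtain ⟨F, hF0, hF, hlF⟩ := hasSecondOrderExpansionWithinAt_lapl hR hRsq
  refine ⟨fun θ => 1 - β * F θ, by simp only [hF0]; ring, (hF.const_mul β).const_sub 1,
    fun θ => ?_⟩
  simp only [completionExponent]
  linear_combination -β * hlF θ

variable [IsFiniteMeasure S]

theorem hasSecondOrderExpansionWithinAt_completionTransform (hβ : 0 ≤ β)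
    (hS : ∀ᵐ x ∂S, 0 ≤ x) (hSsq : Integrable (fun x => x ^ 2) S)
    (hR : ∀ᵐ x ∂ R, 0 ≤ x) (hRsq : Integrable (fun x => x ^ 2) R) :
    HasSecondOrderExpansionWithinAt (completionTransform β S R)
      (-((∫ x, x ∂S) * (1 + β * ∫ x, x ∂ R)))
      ((β * (∫ x, x ∂S) * (∫ x, x ^ 2 ∂ R) + (1 + β * ∫ x, x ∂ R) ^ 2 * ∫ x, x ^ 2 ∂S) / 2)
      (Ici 0) 0 := by
  convert (hasSecondOrderExpansionWithinAt_lapl hS hSsq).comp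
    (hasSecondOrderExpansionWithinAt_completionExponent hR hRsq)
    (fun θ => completionExponent_nonneg hβ hR) completionExponent_zero using 1
  · rfl
  · ring
  · ring

theorem hasSecondOrderExpansionWithinAt_completionTransform_sub_mul (hlam : 0 ≤ lam) (hβ : 0 ≤ β)
    (hS : ∀ᵐ x ∂S, 0 ≤ x) (hSsq : Integrable (fun x => x ^ 2) S)
    (hR : ∀ᵐ x ∂ R, 0 ≤ x) (hRsq : Integrable (fun x => x ^ 2) R) :
    HasSecondOrderExpansionWithinAt (fun z => completionTransform β S R (lam - lam * z))
      (lam * ((∫ x, x ∂S) * (1 + β * ∫ x, x ∂ R)))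
      (lam ^ 2 *
        (β * (∫ x, x ∂S) * (∫ x, x ^ 2 ∂ R) + (1 + β * ∫ x, x ∂ R) ^ 2 * ∫ x, x ^ 2 ∂S) / 2)
      (Iic 1) 1 := by
  have hmaps : MapsTo (fun z => lam - lam * z) (Iic 1) (Ici 0) := fun z hz =>
    sub_nonneg.2 (mul_le_of_le_one_right hlam hz)
  convert (hasSecondOrderExpansionWithinAt_completionTransform hβ hS hSsq hR hRsq).comp
    (hasSecondOrderExpansionWithinAt_sub_mul lam lam 1 (Iic 1)) hmaps (by ring) using 1 <;> ring

end CompletionTime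

section OrbitSize

variable {lam alpha nu : ℝ} {δ₁ δ₂ φ : ℝ → ℝ}

theorem tendsto_logDeriv_orbit {k₁ k₂ : ℝ} (hnu : nu ≠ 0) (hk₁ : k₁ ≠ 1)
    (hδ₁ : HasDerivWithinAt δ₁ k₁ (Iio 1) 1) (hδ₁1 : δ₁ 1 = 1)
    (hδ₂ : HasDerivWithinAt δ₂ k₂ (Iio 1) 1) (hδ₂1 : δ₂ 1 = 1) :
    Tendsto (fun u => (lam * (1 - δ₁ u) + alpha * (1 - δ₂ u)) / (nu * (δ₁ u - u))) (𝓝[<] 1)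
      (𝓝 ((lam * k₁ + alpha * k₂) / (nu * (1 - k₁)))) := by
  rw [hasDerivWithinAt_iff_tendsto_slope' self_notMem_Iio] at hδ₁ hδ₂
  refine (((hδ₁.const_mul lam).add (hδ₂.const_mul alpha)).div ((hδ₁.const_sub 1).const_mul nu)
    (mul_ne_zero hnu (sub_ne_zero.2 hk₁.symm))).congr' ?_
  filter_upwards [self_mem_nhdsWithin] with u (hu : u < 1)
  have hu' : u - 1 ≠ 0 := (sub_neg.2 hu).ne
  simp only [Pi.div_apply, slope_def_field, hδ₁1, hδ₂1]
  rw [← mul_div_mul_right _ _ (neg_ne_zero.2 hu')]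
  congr 1 <;> field_simp <;> ring

theorem tendsto_slope_orbit {a₁ a₂ b₁ b₂ G : ℝ} (hlam : lam ≠ 0)
    (ha₁ : lam * a₁ ≠ 1) (ha₂ : 1 + alpha * a₂ ≠ 0)
    (hδ₁ : HasSecondOrderExpansionWithinAt δ₁ (lam * a₁) (lam ^ 2 * b₁ / 2) (Iic 1) 1)
    (hδ₁1 : δ₁ 1 = 1)
    (hδ₂ : HasSecondOrderExpansionWithinAt δ₂ (lam * a₂) (lam ^ 2 * b₂ / 2) (Iic 1) 1)
    (hδ₂1 : δ₂ 1 = 1) (hφ : HasDerivWithinAt φ G (Iic 1) 1) (hφ1 : φ 1 = 1) :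
    Tendsto (fun z => ((lam * (1 - z) + alpha * (1 - δ₂ z)) / (lam * (δ₁ z - z)) *
        ((1 - lam * a₁) / (1 + alpha * a₂) * φ z) - 1) / (z - 1)) (𝓝[<] 1)
      (𝓝 (lam ^ 2 * b₁ / (2 * (1 - lam * a₁)) +
        lam * alpha * b₂ / (2 * (1 + alpha * a₂)) + G)) := by
  obtain ⟨F₁, hF₁1, hF₁, hδF₁⟩ := hδ₁
  obtain ⟨F₂, hF₂1, hF₂, hδF₂⟩ := hδ₂
  have hA : 1 - lam * a₁ ≠ 0 := sub_ne_zero.2 ha₁.symm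
  have hden : lam * (1 - F₁ 1) ≠ 0 := by
    rw [hF₁1]
    exact mul_ne_zero hlam hA
  have hderiv := (((hF₂.const_mul alpha).const_add lam).fun_div
    ((hF₁.const_sub 1).const_mul lam) hden).fun_mul
      (hφ.const_mul ((1 - lam * a₁) / (1 + alpha * a₂)))
  have hslope := (hasDerivWithinAt_iff_tendsto_slope' self_notMem_Iio).1
    (hderiv.mono Iio_subset_Iic_self)
  convert hslope.congr' ?_ using 2
  · rw [hF₁1, hF₂1, hφ1]
    field_simp
    ring
  · filter_upwards [self_mem_nhdsWithin] with z (hz : z < 1)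
    have hcancel : (lam + alpha * F₂ z) / (lam * (1 - F₁ z)) =
        (lam * (1 - z) + alpha * (1 - δ₂ z)) / (lam * (δ₁ z - z)) := by
      rw [hδF₁ z, hδF₂ z, hδ₁1, hδ₂1, ← mul_div_mul_left _ _ (sub_pos.2 hz).ne']
      congr 1 <;> ring
    have hone : (lam + alpha * F₂ 1) / (lam * (1 - F₁ 1)) *
        ((1 - lam * a₁) / (1 + alpha * a₂) * φ 1) = 1 := by
      rw [hF₁1, hF₂1, hφ1]
      field_simp
    rw [slope_def_field, hone, hcancel]

end OrbitSize

theorem mean_orbit_size_general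
    {lam alpha nu beta1 beta2 : ℝ}
    (hlam : 0 < lam) (hnu : nu ≠ 0) (hbeta1 : 0 ≤ beta1) (hbeta2 : 0 ≤ beta2)
    {S1 R1 S2 R2 : Measure ℝ}
    [IsProbabilityMeasure S1] [IsProbabilityMeasure R1]
    [IsProbabilityMeasure S2] [IsProbabilityMeasure R2]
    (hS1 : S1 (Iio 0) = 0) (hR1 : R1 (Iio 0) = 0) (hS2 : S2 (Iio 0) = 0) (hR2 : R2 (Iio 0) = 0)
    {mu11 gamma11 mu21 gamma21 : ℝ}
    (hmu11 : mu11 = ∫ x, x ∂S1) (hgamma11 : gamma11 = ∫ x, x ∂ R1)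
    (hmu21 : mu21 = ∫ x, x ∂S2) (hgamma21 : gamma21 = ∫ x, x ∂ R2)
    {rho sigma : ℝ} (hrho : rho = lam * mu11) (hsigma : sigma = alpha * mu21)
    {h1 h2 δ1 δ2 g φ : ℝ → ℝ}
    (hh1 : ∀ z, h1 z = lam + beta1 - lam * z - beta1 * lapl R1 (lam - lam * z))
    (hh2 : ∀ z, h2 z = lam + beta2 - lam * z - beta2 * lapl R2 (lam - lam * z))
    (hδ1 : ∀ z, δ1 z = lapl S1 (h1 z)) (hδ2 : ∀ z, δ2 z = lapl S2 (h2 z))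
    (hg : ∀ u, g u = (lam * (1 - δ1 u) + alpha * (1 - δ2 u)) / (nu * (δ1 u - u)))
    (hφ : ∀ z, φ z = Real.exp (-(∫ u in z..1, g u)))
    (hiS1sq : Integrable (fun x => x ^ 2) S1) (hiR1sq : Integrable (fun x => x ^ 2) R1)
    (hiS2sq : Integrable (fun x => x ^ 2) S2) (hiR2sq : Integrable (fun x => x ^ 2) R2)
    {mu12 gamma12 mu22 gamma22 : ℝ}
    (hmu12 : mu12 = ∫ x, x ^ 2 ∂S1) (hgamma12 : gamma12 = ∫ x, x ^ 2 ∂ R1)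
    (hmu22 : mu22 = ∫ x, x ^ 2 ∂S2) (hgamma22 : gamma22 = ∫ x, x ^ 2 ∂ R2)
    {P0 P : ℝ → ℝ}
    (hP0 : ∀ z, P0 z = ((1 - rho * (1 + beta1 * gamma11)) /
      (1 + sigma * (1 + beta2 * gamma21))) * φ z)
    (hP : ∀ z, P z = (lam * (1 - z) + alpha * (1 - δ2 z)) / (lam * (δ1 z - z)) * P0 z)
    (hload1 : rho * (1 + beta1 * gamma11) ≠ 1) (hload2 : 1 + sigma * (1 + beta2 * gamma21) ≠ 0) :
    Tendsto (fun z : ℝ => (P z - 1) / (z - 1)) (𝓝[<] 1)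
      (𝓝 (lam ^ 2 * (beta1 * mu11 * gamma12 + (1 + beta1 * gamma11) ^ 2 * mu12) /
          (2 * (1 - rho * (1 + beta1 * gamma11))) +
        lam * alpha * (beta2 * mu21 * gamma22 + (1 + beta2 * gamma21) ^ 2 * mu22) /
          (2 * (1 + sigma * (1 + beta2 * gamma21))) +
        lam * (rho * (1 + beta1 * gamma11) + sigma * (1 + beta2 * gamma21)) /
          (nu * (1 - rho * (1 + beta1 * gamma11))))) := by
  subst hrho hsigma
  simp only [mul_assoc lam mu11, mul_assoc alpha mu21] at hP0 hload1 hload2 ⊢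
  have hδ1_eq := eq_completionTransform hh1 hδ1
  have hδ2_eq := eq_completionTransform hh2 hδ2
  have hδ1_one : δ1 1 = 1 := by simp [hδ1_eq, completionTransform_zero]
  have hδ2_one : δ2 1 = 1 := by simp [hδ2_eq, completionTransform_zero]
  have hδ1_exp := hasSecondOrderExpansionWithinAt_completionTransform_sub_mul hlam.le hbeta1
    (ae_nonneg_of_measure_Iio_zero hS1) hiS1sq (ae_nonneg_of_measure_Iio_zero hR1) hiR1sq
  have hδ2_exp := hasSecondOrderExpansionWithinAt_completionTransform_sub_mul hlam.le hbeta2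
    (ae_nonneg_of_measure_Iio_zero hS2) hiS2sq (ae_nonneg_of_measure_Iio_zero hR2) hiR2sq
  rw [← hδ1_eq, ← hmu11, ← hmu12, ← hgamma11, ← hgamma12] at hδ1_exp
  rw [← hδ2_eq, ← hmu21, ← hmu22, ← hgamma21, ← hgamma22] at hδ2_exp
  have hg_meas : Measurable g := by
    have := measurable_completionTransform (β := beta1) (S := S1) (R := R1)
    have := measurable_completionTransform (β := beta2) (S := S2) (R := R2)
    rw [funext hg, hδ1_eq, hδ2_eq]
    fun_prop
  have hg_lim : Tendsto g (𝓝[<] 1)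
      (𝓝 (lam * (lam * (mu11 * (1 + beta1 * gamma11)) + alpha * (mu21 * (1 + beta2 * gamma21))) /
        (nu * (1 - lam * (mu11 * (1 + beta1 * gamma11)))))) := by
    rw [funext hg]
    convert tendsto_logDeriv_orbit hnu hload1 (hδ1_exp.hasDerivWithinAt.mono Iio_subset_Iic_self)
      hδ1_one (hδ2_exp.hasDerivWithinAt.mono Iio_subset_Iic_self) hδ2_one using 2
    ring
  have hφ_deriv := hasDerivWithinAt_exp_neg_integral
    hg_meas.stronglyMeasurable.stronglyMeasurableAtFilter hg_lim
  rw [← funext hφ] at hφ_deriv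
  simp only [hP, hP0]
  exact tendsto_slope_orbit hlam.ne' hload1 hload2 hδ1_exp hδ1_one hδ2_exp hδ2_one hφ_deriv
    (by simp [hφ])

/-- the orbit-size generating function
`P(z) = [λ(1−z) + α(1 − δ₂(z))]/(λ(δ₁(z) − z)) · P₀(z)` has a left derivative at
`z = 1` (with value `P(1) = 1`) equal to the mean orbit size
`E[N] = λ²[β₁μ_{1,1}γ_{1,2} + (1 + β₁γ_{1,1})²μ_{1,2}] / (2[1 − ρ(1 + β₁γ_{1,1})])
      + λα[β₂μ_{2,1}γ_{2,2} + (1 + β₂γ_{2,1})²μ_{2,2}] / (2[1 + σ(1 + β₂γ_{2,1})])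
      + λ[ρ(1 + β₁γ_{1,1}) + σ(1 + β₂γ_{2,1})] / (ν[1 − ρ(1 + β₁γ_{1,1})])`. -/
theorem mean_orbit_size
    (lam alpha nu beta1 beta2 : ℝ)
    (hlam : 0 < lam) (halpha : 0 < alpha) (hnu : 0 < nu)
    (hbeta1 : 0 ≤ beta1) (hbeta2 : 0 ≤ beta2)
    (S1 R1 S2 R2 : Measure ℝ)
    [IsProbabilityMeasure S1] [IsProbabilityMeasure R1]
    [IsProbabilityMeasure S2] [IsProbabilityMeasure R2]
    (hS1 : S1 (Set.Iio 0) = 0) (hR1 : R1 (Set.Iio 0) = 0)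
    (hS2 : S2 (Set.Iio 0) = 0) (hR2 : R2 (Set.Iio 0) = 0)
    (hiS1 : Integrable (fun x => x) S1) (hiR1 : Integrable (fun x => x) R1)
    (hiS2 : Integrable (fun x => x) S2) (hiR2 : Integrable (fun x => x) R2)
    (mu11 gamma11 mu21 gamma21 : ℝ)
    (hmu11 : mu11 = ∫ x, x ∂S1) (hgamma11 : gamma11 = ∫ x, x ∂ R1)
    (hmu21 : mu21 = ∫ x, x ∂S2) (hgamma21 : gamma21 = ∫ x, x ∂ R2)
    (rho sigma : ℝ) (hrho : rho = lam * mu11) (hsigma : sigma = alpha * mu21)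
    (h1 h2 δ1 δ2 g φ : ℝ → ℝ)
    (hh1 : ∀ z, h1 z = lam + beta1 - lam * z - beta1 * lapl R1 (lam - lam * z))
    (hh2 : ∀ z, h2 z = lam + beta2 - lam * z - beta2 * lapl R2 (lam - lam * z))
    (hδ1 : ∀ z, δ1 z = lapl S1 (h1 z)) (hδ2 : ∀ z, δ2 z = lapl S2 (h2 z))
    (hg : ∀ u, g u = (lam * (1 - δ1 u) + alpha * (1 - δ2 u)) / (nu * (δ1 u - u)))
    (hφ : ∀ z, φ z = Real.exp (-(∫ u in z..1, g u)))
    (hiS1sq : Integrable (fun x => x ^ 2) S1) (hiR1sq : Integrable (fun x => x ^ 2) R1)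
    (hiS2sq : Integrable (fun x => x ^ 2) S2) (hiR2sq : Integrable (fun x => x ^ 2) R2)
    (mu12 gamma12 mu22 gamma22 : ℝ)
    (hmu12 : mu12 = ∫ x, x ^ 2 ∂S1) (hgamma12 : gamma12 = ∫ x, x ^ 2 ∂ R1)
    (hmu22 : mu22 = ∫ x, x ^ 2 ∂S2) (hgamma22 : gamma22 = ∫ x, x ^ 2 ∂ R2)
    (P0 : ℝ → ℝ)
    (hP0 : ∀ z, P0 z = ((1 - rho * (1 + beta1 * gamma11)) /
      (1 + sigma * (1 + beta2 * gamma21))) * φ z)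
    (P : ℝ → ℝ)
    (hP : ∀ z, P z = (lam * (1 - z) + alpha * (1 - δ2 z)) / (lam * (δ1 z - z)) * P0 z)
    (hstab : rho * (1 + beta1 * gamma11) < 1) :
    Filter.Tendsto (fun z : ℝ => (P z - 1) / (z - 1)) (nhdsWithin 1 (Set.Iio 1))
      (nhds (lam ^ 2 * (beta1 * mu11 * gamma12 + (1 + beta1 * gamma11) ^ 2 * mu12) /
          (2 * (1 - rho * (1 + beta1 * gamma11))) +
        lam * alpha * (beta2 * mu21 * gamma22 + (1 + beta2 * gamma21) ^ 2 * mu22) /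
          (2 * (1 + sigma * (1 + beta2 * gamma21))) +
        lam * (rho * (1 + beta1 * gamma11) + sigma * (1 + beta2 * gamma21)) /
          (nu * (1 - rho * (1 + beta1 * gamma11))))) := by
  have hmu21_nonneg := hmu21 ▸ integral_id_nonneg_of_measure_Iio_zero hS2
  have hgamma21_nonneg := hgamma21 ▸ integral_id_nonneg_of_measure_Iio_zero hR2
  exact mean_orbit_size_general hlam hnu.ne' hbeta1 hbeta2 hS1 hR1 hS2 hR2 hmu11 hgamma11 hmu21
    hgamma21 hrho hsigma hh1 hh2 hδ1 hδ2 hg hφ hiS1sq hiR1sq hiS2sq hiR2sq hmu12 hgamma12 hmu22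
    hgamma22 hP0 hP hstab.ne (by rw [hsigma]; positivity)
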